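/- Let A ∈ ℝ^{n×n} be symmetric, let S be a subset of the index set {1,…,n}, and let Q ∈ ℝ^{n×n} be an orthogonal matrix that agrees with the identity matrix outside the principal submatrix on S (that is, Q(k,l) = δ_{kl} whenever k ∉ S or l ∉ S). Set B = Qᵀ A Q. If the principal submatrix of B on S is diagonal (B(k,l) = 0 for all k ≠ l with k, l ∈ S), then Ξ(B)² = Ξ(A)² − Σ_{k≠l, k,l∈S} A(k,l)². -/

import Mathlib

open Matrix

/-- The squared off-diagonal norm `Ξ(A)² = Σ_{i≠j} A(i,j)²`. -/
noncomputable def offDiagSq {n : ℕ} (A : Matrix (Fin n) (Fin n) ℝ) : ℝ :=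
  ∑ i, ∑ j, if i ≠ j then (A i j) ^ 2 else 0

/-- The off-diagonal norm `Ξ(A)`. -/
noncomputable def offXi {n : ℕ} (A : Matrix (Fin n) (Fin n) ℝ) : ℝ :=
  Real.sqrt (offDiagSq A)

/-!
The off-diagonal sum of squares is the total sum of squares minus that of the diagonal. Conjugation
by `Q` preserves the total, which is the trace of `A * Aᵀ`. Since `Q` is block diagonal with
identity block outside `S`, it also acts on the principal submatrix on `S` as an orthogonal
conjugation, preserving the sum of squares there, and it fixes the diagonal entries outside `S`.
Hence the sum of squares of the off-diagonal entries outside `S × S` is invariant.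
-/

section SumSq

variable {m n R : Type*} [Fintype m] [Fintype n]

lemma sum_sum_sq_eq_trace_mul_transpose [Semiring R] (M : Matrix m n R) :
    ∑ i, ∑ j, M i j ^ 2 = (M * Mᵀ).trace := by
  simp [Matrix.trace, Matrix.mul_apply, sq]

lemma sum_sum_sq_transpose_mul_mul [DecidableEq m] [CommSemiring R] (M : Matrix m m R)
    {Q : Matrix m n R} (hQ : Q * Qᵀ = 1) :
    ∑ i, ∑ j, (Qᵀ * M * Q) i j ^ 2 = ∑ i, ∑ j, M i j ^ 2 := by
  simp only [sum_sum_sq_eq_trace_mul_transpose]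
  calc (Qᵀ * M * Q * (Qᵀ * M * Q)ᵀ).trace
      = (Qᵀ * (M * (Q * Qᵀ) * Mᵀ * Q)).trace := by
        simp only [transpose_mul, transpose_transpose, Matrix.mul_assoc]
    _ = (M * Mᵀ * (Q * Qᵀ)).trace := by
        rw [hQ, Matrix.mul_one, Matrix.trace_mul_comm, Matrix.mul_assoc, hQ]
    _ = (M * Mᵀ).trace := by rw [hQ, Matrix.mul_one]

end SumSq

lemma transpose_mul_mul_apply_of_col_eq_single {m n R : Type*} [Fintype m] [DecidableEq m]
    [CommSemiring R] (M : Matrix m m R) {Q : Matrix m n R} {i j : n} {a b : m}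
    (hi : Q.col i = Pi.single a 1) (hj : Q.col j = Pi.single b 1) :
    (Qᵀ * M * Q) i j = M a b :=
  calc (Qᵀ * M * Q) i j
      = Q.col i ⬝ᵥ M *ᵥ Q.col j := by rw [dotProduct_mulVec]; rfl
    _ = M a b := by simp [hi, hj]

section Block

variable {l m n R : Type*} [Fintype m] [CommRing R]

lemma toBlock_mul_of_toBlock_eq_zero (p : l → Prop) (q : m → Prop) [DecidablePred q]
    (r : n → Prop) (M : Matrix l m R) {N : Matrix m n R} (hN : N.toBlock (fun i ↦ ¬q i) r = 0) :
    (M * N).toBlock p r = M.toBlock p q * N.toBlock q r := by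
  rw [toBlock_mul_eq_add p q, hN, Matrix.mul_zero, add_zero]

lemma toBlock_transpose_mul_of_toBlock_eq_zero (p : l → Prop) (q : m → Prop) [DecidablePred q]
    (r : n → Prop) {N : Matrix m l R} (M : Matrix m n R) (hN : N.toBlock (fun i ↦ ¬q i) p = 0) :
    (Nᵀ * M).toBlock p r = (N.toBlock q p)ᵀ * M.toBlock q r := by
  have hNt : Nᵀ.toBlock p (fun i ↦ ¬q i) = 0 := congrArg transpose hN
  rw [toBlock_mul_eq_add p q, hNt, Matrix.zero_mul, add_zero]
  rfl

lemma sum_sum_sq_toBlock_transpose_mul_mul [DecidableEq m] (p : m → Prop) [DecidablePred p]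
    (M : Matrix m m R) {Q : Matrix m m R} (hQ : Qᵀ * Q = 1)
    (hQp : Q.toBlock (fun i ↦ ¬p i) p = 0) :
    ∑ k, ∑ l, (Qᵀ * M * Q).toBlock p p k l ^ 2 = ∑ k, ∑ l, M.toBlock p p k l ^ 2 := by
  have horth : (Q.toBlock p p)ᵀ * Q.toBlock p p = 1 := by
    rw [← toBlock_transpose_mul_of_toBlock_eq_zero p p p Q hQp, hQ, toBlock_one_self]
  rw [toBlock_mul_of_toBlock_eq_zero p p p _ hQp,
    toBlock_transpose_mul_of_toBlock_eq_zero p p p _ hQp,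
    sum_sum_sq_transpose_mul_mul _ (mul_eq_one_comm.mp horth)]

end Block

/-- The sum of squares of the off-diagonal entries of the principal submatrix of `A` on `S`, so that
`offDiagSqOn Finset.univ` is `offDiagSq`. -/
def offDiagSqOn {ι R : Type*} [DecidableEq ι] [Semiring R] (S : Finset ι) (A : Matrix ι ι R) : R :=
  ∑ k ∈ S, ∑ l ∈ S, if k ≠ l then A k l ^ 2 else 0

lemma offXi_sq {n : ℕ} (A : Matrix (Fin n) (Fin n) ℝ) :
    offXi A ^ 2 = offDiagSqOn Finset.univ A := by
  refine Real.sq_sqrt (Finset.sum_nonneg fun i _ ↦ Finset.sum_nonneg fun j _ ↦ ?_)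
  positivity

section OffDiagSqOn

variable {ι R : Type*} [DecidableEq ι]

lemma offDiagSqOn_eq_zero [Semiring R] {S : Finset ι} {A : Matrix ι ι R}
    (hA : ∀ k ∈ S, ∀ l ∈ S, k ≠ l → A k l = 0) : offDiagSqOn S A = 0 :=
  Finset.sum_eq_zero fun k hk ↦ Finset.sum_eq_zero fun l hl ↦ by
    simpa using fun hkl ↦ by simp [hA k hk l hl hkl]

lemma offDiagSqOn_add_sum_diag_sq [Semiring R] (S : Finset ι) (A : Matrix ι ι R) :
    offDiagSqOn S A + ∑ k ∈ S, A k k ^ 2 = ∑ k ∈ S, ∑ l ∈ S, A k l ^ 2 := by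
  rw [offDiagSqOn, ← Finset.sum_add_distrib]
  refine Finset.sum_congr rfl fun k hk ↦ ?_
  have hdiag : A k k ^ 2 = ∑ l ∈ S, if k = l then A k l ^ 2 else 0 := by simp [hk]
  rw [hdiag, ← Finset.sum_add_distrib]
  exact Finset.sum_congr rfl fun l _ ↦ by split_ifs <;> simp_all

variable [Fintype ι] [CommRing R] {S : Finset ι} {Q : Matrix ι ι R}

theorem block_jacobi_offdiag_decrease_general (A : Matrix ι ι R) (hQ : Qᵀ * Q = 1)
    (hQsupp : ∀ k l, (k ∉ S ∨ l ∉ S) → Q k l = if k = l then 1 else 0) :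
    offDiagSqOn Finset.univ (Qᵀ * A * Q) =
      offDiagSqOn Finset.univ A - (offDiagSqOn S A - offDiagSqOn S (Qᵀ * A * Q)) := by
  have hblock : Q.toBlock (· ∉ S) (· ∈ S) = 0 := by
    ext ⟨k, hk⟩ ⟨l, hl⟩
    exact (hQsupp k l (.inl hk)).trans (if_neg (ne_of_mem_of_not_mem hl hk).symm)
  have hcol {i : ι} (hi : i ∉ S) : Q.col i = Pi.single i 1 := by
    ext k
    simp [hQsupp k i (.inr hi), Pi.single_apply]
  have hdiag : ∑ i ∈ Sᶜ, (Qᵀ * A * Q) i i ^ 2 = ∑ i ∈ Sᶜ, A i i ^ 2 :=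
    Finset.sum_congr rfl fun i hi ↦ by
      have hQi := hcol (Finset.mem_compl.mp hi)
      rw [transpose_mul_mul_apply_of_col_eq_single A hQi hQi]
  have htotal := sum_sum_sq_transpose_mul_mul A (mul_eq_one_comm.mp hQ)
  have hprincipal :
      ∑ k ∈ S, ∑ l ∈ S, (Qᵀ * A * Q) k l ^ 2 = ∑ k ∈ S, ∑ l ∈ S, A k l ^ 2 := by
    simp only [Finset.sum_subtype (F := Subtype.fintype (· ∈ S)) S fun _ ↦ Iff.rfl]
    exact sum_sum_sq_toBlock_transpose_mul_mul (· ∈ S) A hQ hblock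
  simp only [← offDiagSqOn_add_sum_diag_sq] at htotal hprincipal
  simp only [← Finset.sum_add_sum_compl S] at htotal
  linear_combination htotal - hprincipal - hdiag

end OffDiagSqOn

/-- Diagonalizing the principal submatrix on an index set `S` by an orthogonal similarity
supported on `S` removes exactly the contribution of its off-diagonal entries from `Ξ(A)²`. -/
theorem block_jacobi_offdiag_decrease (n : ℕ)
    (A : Matrix (Fin n) (Fin n) ℝ) (hA : Aᵀ = A)
    (S : Finset (Fin n))
    (Q : Matrix (Fin n) (Fin n) ℝ) (hQ : Qᵀ * Q = 1)
    (hQsupp : ∀ k l : Fin n, (k ∉ S ∨ l ∉ S) → Q k l = if k = l then 1 else 0)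
    (B : Matrix (Fin n) (Fin n) ℝ) (hB : B = Qᵀ * A * Q)
    (hdiagS : ∀ k ∈ S, ∀ l ∈ S, k ≠ l → B k l = 0) :
    offXi B ^ 2 = offXi A ^ 2 - ∑ k ∈ S, ∑ l ∈ S, (if k ≠ l then A k l ^ 2 else 0) := by
  rw [offXi_sq, offXi_sq, hB, block_jacobi_offdiag_decrease_general A hQ hQsupp, ← hB,
    offDiagSqOn_eq_zero hdiagS, sub_zero]
  rfl
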